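/- (Clebsch–Gordan formula for the adjoint of Sym^n.) Let n ≥ 1 and let sl_{n+1}(ℂ) be the space of trace-zero (n+1)×(n+1) complex matrices, on which SL₂(ℂ) acts by A · X = M_A X M_A^{−1}, where M_A is the matrix of Sym^n(A) in the monomial basis of V_n. Then there is a ℂ-linear SL₂(ℂ)-equivariant isomorphism sl_{n+1}(ℂ) ≅ ⊕_{i=1}^{n} V_{2i}, where SL₂(ℂ) acts on each summand V_{2i} via Sym^{2i}. -/

import Mathlib

noncomputable section

open MvPolynomial Matrix

/-- `V k`: the space of homogeneous polynomials of degree `k` in two variables `X = X 0`,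
`Y = X 1`. -/
abbrev Vhom (k : ℕ) : Submodule ℂ (MvPolynomial (Fin 2) ℂ) :=
  homogeneousSubmodule (Fin 2) ℂ k

/-- Substitution of the variables by the linear forms determined by the *transpose* of `A`,
i.e. `X_i ↦ ∑ j, A j i • X j`; this is `P ↦ P ∘ Aᵗ`. -/
def substMap (A : Matrix (Fin 2) (Fin 2) ℂ) :
    MvPolynomial (Fin 2) ℂ →ₐ[ℂ] MvPolynomial (Fin 2) ℂ :=
  aeval fun i => ∑ j : Fin 2, C (A j i) * X j

lemma substMap_isHomogeneous (A : Matrix (Fin 2) (Fin 2) ℂ) {k : ℕ}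
    {p : MvPolynomial (Fin 2) ℂ} (hp : p.IsHomogeneous k) :
    (substMap A p).IsHomogeneous k := by
  have hg : ∀ i : Fin 2, ((fun i : Fin 2 => ∑ j : Fin 2, C (A j i) * X j) i).IsHomogeneous 1 := by
    intro i
    apply MvPolynomial.IsHomogeneous.sum
    intro j _
    simpa using (MvPolynomial.isHomogeneous_X ℂ j).C_mul (A j i)
  rw [substMap]
  simpa using hp.aeval _ hg

/-- The representation `Sym^k` of `SL(2,ℂ)` on the space `Vhom k` of homogeneous polynomials of
degree `k`: the action of `A` is `P ↦ P ∘ Aᵗ`. -/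
def SymSL (k : ℕ) (A : Matrix.SpecialLinearGroup (Fin 2) ℂ) : Vhom k →ₗ[ℂ] Vhom k :=
  ((substMap A.1).toLinearMap).restrict fun _p hp =>
    (MvPolynomial.mem_homogeneousSubmodule _ _).2
      (substMap_isHomogeneous A.1 ((MvPolynomial.mem_homogeneousSubmodule _ _).1 hp))

/-- The space `sl_{n+1}(ℂ)`, realized as the trace-zero endomorphisms of the
`(n+1)`-dimensional space `V_n`, on which `SL₂(ℂ)` acts by conjugation through `Sym^n`. -/
def slV (n : ℕ) : Submodule ℂ (Module.End ℂ (Vhom n)) :=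
  LinearMap.ker (LinearMap.trace ℂ (Vhom n))

/-!
Evaluating `T` on the powers `(· ∧ v) ^ n`, where `u ∧ v = u₀ v₁ - u₁ v₀`, turns an endomorphism
`T` of `V_n` into the kernel `(u, v) ↦ T ((· ∧ v) ^ n) (u)`, which is bihomogeneous of bidegree
`(n, n)`. On the other side, `(f_0, …, f_n)` with `f_i ∈ V_{2i}` is sent to the polynomial `∑ i,
(u ∧ v) ^ (n - i) * D_i f_i` of the same bidegree, where the polarization `D_i f` is the
coefficient of `t ^ i` in `f (u + t v)`. The second map is injective because `u ∧ v` vanishes on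
the diagonal `u = v`, where `D_i f_i` restricts to a nonzero multiple of `f_i`. All spaces have
dimension `(n + 1) ^ 2` and both maps are `SL₂`-equivariant, so `End V_n` is the sum of the
`V_{2i}` with `0 ≤ i ≤ n`. The kernel of the identity is `(u ∧ v) ^ n`, hence the scalars are the
component `V_0`, and their complement `sl_{n+1}` is isomorphic to the sum of the remaining
components.
-/

open Finset.HasAntidiagonal

section Graded

variable {σ R M A : Type*} [CommSemiring R] [AddCommMonoid M] [CommSemiring A] [Algebra R A]

theorem aeval_mem_graded (𝒜 : M → Submodule R A) [SetLike.GradedMonoid 𝒜] {w : σ → M} {g : σ → A}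
    (hg : ∀ i, g i ∈ 𝒜 (w i)) {p : MvPolynomial σ R} {m : M} (hp : p.IsWeightedHomogeneous w m) :
    aeval g p ∈ 𝒜 m := by
  induction hp using IsWeightedHomogeneous.induction_on with
  | zero => simp
  | add p q _ _ hp hq => simpa using add_mem hp hq
  | monomial d r hd =>
    rw [aeval_monomial, ← Algebra.smul_def, ← hd]
    exact Submodule.smul_mem _ r (SetLike.prod_pow_mem_graded 𝒜 w g d fun i _ => hg i)

theorem aeval_const_mul_of_isHomogeneous (c : A) (g : σ → A) {p : MvPolynomial σ R} {m : ℕ}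
    (hp : p.IsHomogeneous m) : aeval (fun i => c * g i) p = c ^ m * aeval g p := by
  induction hp using IsWeightedHomogeneous.induction_on with
  | zero => simp
  | add p q _ _ hp hq => rw [map_add, map_add, hp, hq, mul_add]
  | monomial d r hd =>
    have hd : d.degree = m := by rw [← hd, Finsupp.degree_eq_weight_one]; rfl
    rw [aeval_monomial, aeval_monomial, ← hd, Finsupp.degree_apply]
    simp only [mul_pow, Finsupp.prod, Finset.prod_mul_distrib, Finset.prod_pow_eq_pow_sum]
    ring

end Graded

section Dimension

/-- The monomials of weighted degree `m`, as a basis of the weighted homogeneous polynomials. -/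
def weightedMonomialBasis {σ R M : Type*} [CommSemiring R] [AddCommMonoid M] (w : σ → M) (m : M) :
    Module.Basis {d : σ →₀ ℕ | Finsupp.weight w d = m} R (weightedHomogeneousSubmodule R w m) :=
  (basisRestrictSupport R _).map
    (LinearEquiv.ofEq _ _ (weightedHomogeneousSubmodule_eq_finsupp_supported R w m).symm)

theorem coe_weightedMonomialBasis {σ R M : Type*} [CommSemiring R] [AddCommMonoid M]
    (w : σ → M) (m : M) (d : {d : σ →₀ ℕ | Finsupp.weight w d = m}) :
    (weightedMonomialBasis (R := R) w m d : MvPolynomial σ R) = monomial d 1 := by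
  have hd : monomial d.1 (1 : R) ∈ weightedHomogeneousSubmodule R w m :=
    isWeightedHomogeneous_monomial w d.1 1 d.2
  suffices weightedMonomialBasis w m d = ⟨monomial d.1 (1 : R), hd⟩ by rw [this]
  rw [Module.Basis.apply_eq_iff]
  ext e
  classical
  change coeff e.1 (monomial d.1 (1 : R)) = _
  simp [coeff_monomial, Finsupp.single_apply, Subtype.ext_iff]

/-- The exponent of a monomial in two variables, as a pair. -/
def binaryExponentEquiv : (Fin 2 →₀ ℕ) ≃ ℕ × ℕ :=
  Finsupp.equivFunOnFinite.trans (finTwoArrowEquiv ℕ)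

/-- The monomials `X ^ a * Y ^ b` with `a + b = n`, as a basis of `V_n`. -/
def binaryMonomialBasis (n : ℕ) : Module.Basis (antidiagonal n) ℂ (Vhom n) :=
  ((weightedMonomialBasis 1 n).map
    (LinearEquiv.ofEq _ _ (weightedHomogeneousSubmodule_one (Fin 2) ℂ n))).reindex <|
      binaryExponentEquiv.subtypeEquiv fun d => by
        simp [binaryExponentEquiv, Finsupp.weight_apply, Finsupp.sum_fintype]

theorem coe_binaryMonomialBasis {n : ℕ} (p : antidiagonal n) :
    (binaryMonomialBasis n p : MvPolynomial (Fin 2) ℂ) = X 0 ^ p.1.1 * X 1 ^ p.1.2 := by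
  rw [binaryMonomialBasis, Module.Basis.reindex_apply, Module.Basis.map_apply,
    LinearEquiv.coe_ofEq_apply, coe_weightedMonomialBasis]
  simp [monomial_eq, Finsupp.prod_fintype, binaryExponentEquiv]

instance (n : ℕ) : Module.Finite ℂ (Vhom n) := .of_basis (binaryMonomialBasis n)

theorem finrank_Vhom (n : ℕ) : Module.finrank ℂ (Vhom n) = n + 1 := by
  rw [Module.finrank_eq_card_basis (binaryMonomialBasis n), Fintype.card_coe,
    Finset.Nat.card_antidiagonal]

/-- The bigrading of polynomials in two sets of variables. The first component is the *total* degree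
and the second one the degree in the second set of variables, so that the
coefficient of `t ^ k` in `f (u + t v)` has bidegree `(deg f, k)`. -/
def biWeight (σ : Type*) : σ ⊕ σ → ℕ × ℕ := Sum.elim (fun _ => (1, 0)) (fun _ => (1, 1))

/-- The polynomials in `(u, v)` of degree `n` in `u` and degree `n` in `v`. -/
abbrev Bihom (n : ℕ) : Submodule ℂ (MvPolynomial (Fin 2 ⊕ Fin 2) ℂ) :=
  weightedHomogeneousSubmodule ℂ (biWeight (Fin 2)) (2 * n, n)

/-- The products of a monomial of degree `n` in `u` and one of degree `n` in `v`, as a basis of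
`Bihom n`. -/
def bihomMonomialBasis (n : ℕ) : Module.Basis (antidiagonal n × antidiagonal n) ℂ (Bihom n) :=
  (weightedMonomialBasis (biWeight (Fin 2)) (2 * n, n)).reindex <|
    ((Finsupp.sumFinsuppEquivProdFinsupp.trans
      (binaryExponentEquiv.prodCongr binaryExponentEquiv)).subtypeEquiv fun d => by
        have hweight : Finsupp.weight (biWeight (Fin 2)) d =
            (d (.inl 0) + d (.inl 1) + (d (.inr 0) + d (.inr 1)), d (.inr 0) + d (.inr 1)) := by
          simp [Finsupp.weight_apply, Finsupp.sum_fintype, biWeight, -nsmul_eq_mul]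
        change Finsupp.weight (biWeight (Fin 2)) d = (2 * n, n) ↔
          (d (.inl 0), d (.inl 1)) ∈ antidiagonal n ∧ (d (.inr 0), d (.inr 1)) ∈ antidiagonal n
        rw [hweight, mem_antidiagonal, mem_antidiagonal, Prod.mk.injEq]
        lia).trans
      Equiv.subtypeProdEquivProd

instance (n : ℕ) : Module.Finite ℂ (Bihom n) := .of_basis (bihomMonomialBasis n)

theorem finrank_bihom (n : ℕ) : Module.finrank ℂ (Bihom n) = (n + 1) * (n + 1) := by
  rw [Module.finrank_eq_card_basis (bihomMonomialBasis n), Fintype.card_prod, Fintype.card_coe,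
    Finset.Nat.card_antidiagonal]

end Dimension

section Polarization

variable {σ R : Type*} [CommSemiring R]

theorem aeval_C_X (f : MvPolynomial σ R) :
    aeval (fun i => Polynomial.C (X i : MvPolynomial σ R)) f = Polynomial.C f := by
  rw [← Polynomial.algebraMap_eq]
  exact (aeval_algebraMap_apply _ X f).trans (by rw [aeval_X_left_apply])

/-- The expansion of `f (u + t v)` as a polynomial in `t`. -/
def taylorShift : MvPolynomial σ R →ₐ[R] Polynomial (MvPolynomial (σ ⊕ σ) R) :=
  aeval fun i => Polynomial.C (X (.inl i)) + Polynomial.C (X (.inr i)) * Polynomial.X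

/-- The `k`-th polarization of `f`: the coefficient of `t ^ k` in `f (u + t v)`. -/
def polarization (k : ℕ) : MvPolynomial σ R →ₗ[R] MvPolynomial (σ ⊕ σ) R :=
  (Polynomial.lcoeff (MvPolynomial (σ ⊕ σ) R) k).restrictScalars R ∘ₗ taylorShift.toLinearMap

/-- The restriction `F (u, v) ↦ F (u, u)` to the diagonal. -/
def restrictDiag : MvPolynomial (σ ⊕ σ) R →ₐ[R] MvPolynomial σ R :=
  rename (Sum.elim id id)

/-- The polynomials in `t` whose coefficient at `t ^ k` has total degree `m` and degree `k` in the
second set of variables. -/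
def biWeightPolynomial (σ R : Type*) [CommSemiring R] (m : ℕ) :
    Submodule R (Polynomial (MvPolynomial (σ ⊕ σ) R)) where
  carrier := {P | ∀ k, (P.coeff k).IsWeightedHomogeneous (biWeight σ) (m, k)}
  zero_mem' k := by simpa using isWeightedHomogeneous_zero R (biWeight σ) (m, k)
  add_mem' hP hQ k := by simpa using (hP k).add (hQ k)
  smul_mem' r P hP k := by
    simpa using (weightedHomogeneousSubmodule R (biWeight σ) (m, k)).smul_mem r (hP k)

instance : SetLike.GradedMonoid (biWeightPolynomial σ R) where
  one_mem k := by
    rw [Polynomial.coeff_one]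
    split_ifs with hk
    · subst hk
      exact isWeightedHomogeneous_one R (biWeight σ)
    · exact isWeightedHomogeneous_zero ..
  mul_mem {m₁ m₂ P Q} hP hQ k := by
    rw [Polynomial.coeff_mul]
    refine IsWeightedHomogeneous.sum _ _ _ fun p hp => ?_
    rw [← mem_antidiagonal.1 hp, ← Prod.mk_add_mk]
    exact (hP p.1).mul (hQ p.2)

theorem isWeightedHomogeneous_polarization {f : MvPolynomial σ R} {m : ℕ}
    (hf : f.IsHomogeneous m) (k : ℕ) :
    (polarization k f).IsWeightedHomogeneous (biWeight σ) (m, k) := by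
  have hX (i : σ) : Polynomial.C (X (.inl i)) + Polynomial.C (X (.inr i)) * Polynomial.X ∈
      biWeightPolynomial σ R 1 := by
    rintro (_ | _ | k)
    · simpa [biWeight] using isWeightedHomogeneous_X R (biWeight σ) (.inl i)
    · simpa [Polynomial.coeff_C, biWeight] using isWeightedHomogeneous_X R (biWeight σ) (.inr i)
    · simpa [Polynomial.coeff_C, Polynomial.coeff_X] using isWeightedHomogeneous_zero ..
  exact aeval_mem_graded (w := 1) (biWeightPolynomial σ R) hX hf k

theorem polarization_zero (f : MvPolynomial σ R) : polarization 0 f = rename .inl f := by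
  have h : (Polynomial.constantCoeff.comp
      (taylorShift : MvPolynomial σ R →ₐ[R] _).toRingHom) = (rename .inl).toRingHom := by
    ext i <;> simp [taylorShift]
  exact DFunLike.congr_fun h f

/-- On the diagonal `f (u + t u) = (1 + t) ^ m f (u)`. -/
theorem restrictDiag_polarization {f : MvPolynomial σ R} {m : ℕ} (hf : f.IsHomogeneous m) (k : ℕ) :
    restrictDiag (polarization k f) = m.choose k * f := by
  have hdiag : (Polynomial.mapAlgHom restrictDiag) (taylorShift f) =
      (1 + Polynomial.X) ^ m * Polynomial.C f := by
    calc (Polynomial.mapAlgHom restrictDiag) (taylorShift f)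
        = aeval (fun i => (1 + Polynomial.X) * Polynomial.C (X i)) f := by
          rw [taylorShift, ← AlgHom.comp_apply, comp_aeval]
          congr 2
          funext i
          simp only [restrictDiag, map_add, map_mul, Polynomial.coe_mapAlgHom, Polynomial.map_C,
            Polynomial.map_X, RingHom.coe_coe, rename_X, Sum.elim_inl, Sum.elim_inr, id_eq]
          ring
      _ = (1 + Polynomial.X) ^ m * aeval (fun i => Polynomial.C (X i)) f :=
          aeval_const_mul_of_isHomogeneous _ _ hf
      _ = (1 + Polynomial.X) ^ m * Polynomial.C f := by
          rw [aeval_C_X]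
  simpa [polarization, Polynomial.coeff_one_add_X_pow] using congr(($hdiag).coeff k)

end Polarization

section Symbol

theorem eq_zero_of_sum_pow_mul_eq_zero {R S : Type*} [CommRing R] [IsDomain R] [Semiring S]
    {δ : R} (hδ : δ ≠ 0) (φ : R →+* S) (hφ : φ δ = 0) {n : ℕ} {G : Fin n → R}
    (hG : ∀ i, φ (G i) = 0 → G i = 0) (h : ∑ i : Fin n, δ ^ (i : ℕ) * G i = 0) : G = 0 := by
  induction n with
  | zero => exact Subsingleton.elim _ _
  | succ n ih =>
    have h₀ : G 0 = 0 := hG 0 <| by simpa [Fin.sum_univ_succ, hφ] using congr(φ $h)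
    have htail : δ * ∑ i : Fin n, δ ^ (i : ℕ) * G i.succ = 0 := by
      simpa [Fin.sum_univ_succ, h₀, Finset.mul_sum, pow_succ', mul_assoc] using h
    have hsucc := ih (fun i => hG i.succ) ((mul_eq_zero.1 htail).resolve_left hδ)
    exact funext <| Fin.cases h₀ (congrFun hsucc)

/-- The determinant `u₀ v₁ - u₁ v₀` of a pair of vectors. -/
def wedge : MvPolynomial (Fin 2 ⊕ Fin 2) ℂ :=
  X (.inl 0) * X (.inr 1) - X (.inl 1) * X (.inr 0)

theorem isWeightedHomogeneous_wedge :
    wedge.IsWeightedHomogeneous (biWeight (Fin 2)) (2, 1) := by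
  have hmul (i j : Fin 2) : (X (.inl i) * X (.inr j) : MvPolynomial (Fin 2 ⊕ Fin 2) ℂ)
      |>.IsWeightedHomogeneous (biWeight (Fin 2)) (2, 1) :=
    (isWeightedHomogeneous_X ℂ (biWeight (Fin 2)) (.inl i)).mul (isWeightedHomogeneous_X ..)
  exact (hmul 0 1).sub (hmul 1 0)

theorem wedge_ne_zero : wedge ≠ 0 := fun h => by
  simpa [wedge] using congr(eval (Sum.elim ![1, 0] ![0, 1]) $h)

theorem restrictDiag_wedge : restrictDiag wedge = 0 := by
  simp [restrictDiag, wedge, mul_comm]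

/-- The map `(f_0, …, f_n) ↦ ∑ i, (u ∧ v) ^ (n - i) * D_i f_i`, where `D_i` is polarization. -/
def symbolMap (n : ℕ) :
    ((i : Fin (n + 1)) → Vhom (2 * i)) →ₗ[ℂ] MvPolynomial (Fin 2 ⊕ Fin 2) ℂ :=
  ∑ i : Fin (n + 1), LinearMap.mulLeft ℂ (wedge ^ (i.rev : ℕ)) ∘ₗ polarization i ∘ₗ
    (Vhom (2 * i)).subtype ∘ₗ LinearMap.proj i

theorem symbolMap_apply {n : ℕ} (f : (i : Fin (n + 1)) → Vhom (2 * i)) :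
    symbolMap n f =
      ∑ i : Fin (n + 1), wedge ^ (i.rev : ℕ) * polarization i (f i : MvPolynomial (Fin 2) ℂ) := by
  simp [symbolMap]

theorem symbolMap_mem_bihom {n : ℕ} (f : (i : Fin (n + 1)) → Vhom (2 * i)) :
    symbolMap n f ∈ Bihom n := by
  rw [symbolMap_apply]
  refine Submodule.sum_mem _ fun i _ => ?_
  have hi := (isWeightedHomogeneous_wedge.pow i.rev).mul
    (isWeightedHomogeneous_polarization (f i).2 i)
  have hdeg : (i.rev : ℕ) • (2, 1) + (2 * (i : ℕ), (i : ℕ)) = (2 * n, n) := by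
    simp only [Fin.val_rev, Prod.smul_mk, smul_eq_mul, mul_one, Prod.mk_add_mk, Prod.mk.injEq]
    lia
  rwa [hdeg] at hi

theorem symbolMap_injective (n : ℕ) : Function.Injective (symbolMap n) := by
  refine (injective_iff_map_eq_zero _).2 fun f hf => ?_
  have hpol (i : Fin (n + 1))
      (hi : restrictDiag (polarization i (f i : MvPolynomial (Fin 2) ℂ)) = 0) : f i = 0 := by
    rw [restrictDiag_polarization (f i).2] at hi
    refine Subtype.ext ((mul_eq_zero.1 hi).resolve_left ?_)
    exact_mod_cast (Nat.choose_pos (by lia)).ne'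
  have hsum : ∑ i : Fin (n + 1),
      wedge ^ (i : ℕ) * polarization i.rev (f i.rev : MvPolynomial (Fin 2) ℂ) = 0 := by
    rw [symbolMap_apply, ← Equiv.sum_comp Fin.revPerm] at hf
    simp only [Fin.revPerm_apply, Fin.rev_rev] at hf
    exact hf
  have hzero := eq_zero_of_sum_pow_mul_eq_zero wedge_ne_zero (restrictDiag : _ →ₐ[ℂ] _).toRingHom
    restrictDiag_wedge (fun i hi => by rw [hpol i.rev hi, Submodule.coe_zero, map_zero]) hsum
  have hrev (i : Fin (n + 1)) : f i.rev = 0 := hpol i.rev <| by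
    simpa using congr(restrictDiag ($hzero i))
  exact funext (Fin.rev_surjective.forall.2 hrev)

end Symbol

section Kernel

/-- The linear form `u ↦ u ∧ v` raised to the power `n`. -/
def wedgePow (n : ℕ) (v : Fin 2 → ℂ) : Vhom n :=
  ⟨(C (v 1) * X 0 - C (v 0) * X 1) ^ n, by
    have hX (c : ℂ) (i : Fin 2) : (C c * X i : MvPolynomial (Fin 2) ℂ).IsHomogeneous 1 :=
      (isHomogeneous_X ℂ i).C_mul c
    simpa using ((hX (v 1) 0).sub (hX (v 0) 1)).pow n⟩

theorem eval_wedgePow (n : ℕ) (u v : Fin 2 → ℂ) :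
    eval u (wedgePow n v : MvPolynomial (Fin 2) ℂ) = (v 1 * u 0 - v 0 * u 1) ^ n := by
  simp [wedgePow]

theorem wedgePow_eq_sum (n : ℕ) (v : Fin 2 → ℂ) :
    wedgePow n v = ∑ p : antidiagonal n,
      (n.choose p.1.1 * v 1 ^ p.1.1 * (-v 0) ^ p.1.2) • binaryMonomialBasis n p := by
  apply Subtype.ext
  have hadd := (Commute.all (C (v 1) * X 0 : MvPolynomial (Fin 2) ℂ) (C (-v 0) * X 1)).add_pow' n
  rw [map_neg, neg_mul, ← sub_eq_add_neg, ← Finset.sum_coe_sort] at hadd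
  simp only [wedgePow, hadd, Submodule.coe_sum, Submodule.coe_smul, coe_binaryMonomialBasis]
  refine Finset.sum_congr rfl fun p _ => ?_
  simp only [smul_eq_C_mul, nsmul_eq_mul, map_mul, map_pow, map_natCast, map_neg]
  ring

/-- The polynomial kernel `(u, v) ↦ T ((· ∧ v) ^ n) (u)` of an endomorphism `T`. -/
def kernelMap (n : ℕ) : Module.End ℂ (Vhom n) →ₗ[ℂ] MvPolynomial (Fin 2 ⊕ Fin 2) ℂ :=
  ∑ p : antidiagonal n,
    LinearMap.mulLeft ℂ (n.choose p.1.1 • (X (.inr 1) ^ p.1.1 * (-X (.inr 0)) ^ p.1.2)) ∘ₗ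
      (rename Sum.inl).toLinearMap ∘ₗ (Vhom n).subtype ∘ₗ
        LinearMap.applyₗ (binaryMonomialBasis n p)

theorem kernelMap_apply {n : ℕ} (T : Module.End ℂ (Vhom n)) :
    kernelMap n T = ∑ p : antidiagonal n,
      n.choose p.1.1 • (X (.inr 1) ^ p.1.1 * (-X (.inr 0)) ^ p.1.2) *
        rename Sum.inl (T (binaryMonomialBasis n p) : MvPolynomial (Fin 2) ℂ) := by
  simp [kernelMap, mul_assoc]

theorem eval_kernelMap {n : ℕ} (T : Module.End ℂ (Vhom n)) (w : Fin 2 ⊕ Fin 2 → ℂ) :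
    eval w (kernelMap n T) =
      eval (w ∘ .inl) (T (wedgePow n (w ∘ .inr)) : MvPolynomial (Fin 2) ℂ) := by
  simp [kernelMap_apply, wedgePow_eq_sum, eval_rename, smul_eval, mul_assoc]

theorem kernelMap_mem_bihom {n : ℕ} (T : Module.End ℂ (Vhom n)) : kernelMap n T ∈ Bihom n := by
  rw [kernelMap_apply]
  have hX (j : Fin 2) : (X (.inr j) : MvPolynomial (Fin 2 ⊕ Fin 2) ℂ).IsWeightedHomogeneous
      (biWeight (Fin 2)) (1, 1) :=
    isWeightedHomogeneous_X ℂ (biWeight (Fin 2)) (.inr j)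
  refine Submodule.sum_mem _ fun p _ => ?_
  rw [smul_mul_assoc]
  refine nsmul_mem ?_ _
  have hp := (((hX 1).pow p.1.1).mul ((hX 0).neg.pow p.1.2)).mul
    (isWeightedHomogeneous_polarization (T (binaryMonomialBasis n p)).2 0)
  have hdeg : p.1.1 • (1, 1) + p.1.2 • (1, 1) + (n, 0) = (2 * n, n) := by
    have := mem_antidiagonal.1 p.2
    simp only [Prod.smul_mk, smul_eq_mul, mul_one, Prod.mk_add_mk, add_zero, Prod.mk.injEq]
    lia
  rwa [hdeg, polarization_zero] at hp

theorem kernelMap_injective (n : ℕ) : Function.Injective (kernelMap n) := by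
  refine (injective_iff_map_eq_zero _).2 fun T hT => (binaryMonomialBasis n).ext fun q => ?_
  let dehomogenize : MvPolynomial (Fin 2 ⊕ Fin 2) ℂ →ₐ[ℂ] Polynomial (MvPolynomial (Fin 2) ℂ) :=
    aeval (Sum.elim (fun i => Polynomial.C (X i)) ![-1, Polynomial.X])
  have hrename (f : MvPolynomial (Fin 2) ℂ) : dehomogenize (rename .inl f) = Polynomial.C f := by
    rw [aeval_rename, Sum.elim_comp_inl, aeval_C_X]
  have hterm (p : antidiagonal n) :
      dehomogenize (n.choose p.1.1 • (X (.inr 1) ^ p.1.1 * (-X (.inr 0)) ^ p.1.2) *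
        rename Sum.inl (T (binaryMonomialBasis n p) : MvPolynomial (Fin 2) ℂ)) =
      Polynomial.C (n.choose p.1.1 • (T (binaryMonomialBasis n p) : MvPolynomial (Fin 2) ℂ)) *
        Polynomial.X ^ p.1.1 := by
    rw [map_mul, hrename]
    simp [dehomogenize]
  have hcoeff : n.choose q.1.1 • (T (binaryMonomialBasis n q) : MvPolynomial (Fin 2) ℂ) = 0 := by
    have h := congr((dehomogenize $hT).coeff q.1.1)
    rw [kernelMap_apply, map_sum, Polynomial.finsetSum_coeff] at h
    simp only [hterm, Polynomial.coeff_C_mul_X_pow] at h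
    rw [Finset.sum_eq_single q (fun p _ hp => if_neg fun hq =>
      hp (antidiagonal_subtype_ext hq.symm)) (by simp)] at h
    simpa using h
  have hchoose : n.choose q.1.1 ≠ 0 :=
    (Nat.choose_pos (antidiagonal.fst_le q.2)).ne'
  exact Subtype.ext ((smul_eq_zero.1 hcoeff).resolve_left hchoose)

theorem kernelMap_one (n : ℕ) : kernelMap n 1 = wedge ^ n := by
  refine MvPolynomial.funext fun w => ?_
  simp only [eval_kernelMap, eval_wedgePow, wedge, Function.comp_apply, Module.End.one_apply,
    map_pow, map_sub, map_mul, eval_X]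
  ring

end Kernel

section Equivariance

/-- The linear substitution `substMap A` performed in both sets of variables. -/
def substPair (A : Matrix (Fin 2) (Fin 2) ℂ) :
    MvPolynomial (Fin 2 ⊕ Fin 2) ℂ →ₐ[ℂ] MvPolynomial (Fin 2 ⊕ Fin 2) ℂ :=
  aeval (Sum.elim (fun i => rename .inl (substMap A (X i)))
    (fun i => rename .inr (substMap A (X i))))

theorem eval_substMap (A : Matrix (Fin 2) (Fin 2) ℂ) (v : Fin 2 → ℂ) (f : MvPolynomial (Fin 2) ℂ) :
    eval v (substMap A f) = eval (v ᵥ* A) f := by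
  have h : (aeval v).comp (substMap A) = aeval (v ᵥ* A) := by
    ext i
    simp [substMap, vecMul, dotProduct, mul_comm]
  exact DFunLike.congr_fun h f

theorem eval_SymSL {n : ℕ} (A : SpecialLinearGroup (Fin 2) ℂ) (v : Fin 2 → ℂ) (f : Vhom n) :
    eval v (SymSL n A f : MvPolynomial (Fin 2) ℂ) = eval (v ᵥ* A.1) f :=
  eval_substMap A.1 v f

theorem eval_substPair (A : Matrix (Fin 2) (Fin 2) ℂ) (w : Fin 2 ⊕ Fin 2 → ℂ)
    (F : MvPolynomial (Fin 2 ⊕ Fin 2) ℂ) :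
    eval w (substPair A F) = eval (Sum.elim ((w ∘ .inl) ᵥ* A) ((w ∘ .inr) ᵥ* A)) F := by
  have h : (aeval w).comp (substPair A) =
      aeval (Sum.elim ((w ∘ .inl) ᵥ* A) ((w ∘ .inr) ᵥ* A)) := by
    ext (i | i) <;>
      simp [substPair, substMap, vecMul, dotProduct, mul_comm]
  exact DFunLike.congr_fun h F

theorem taylorShift_substMap (A : Matrix (Fin 2) (Fin 2) ℂ) (f : MvPolynomial (Fin 2) ℂ) :
    taylorShift (substMap A f) = Polynomial.mapAlgHom (substPair A) (taylorShift f) := by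
  have h : taylorShift.comp (substMap A) =
      (Polynomial.mapAlgHom (substPair A)).comp taylorShift := by
    ext i : 1
    simp only [taylorShift, substMap, substPair, Fin.sum_univ_two, AlgHom.comp_apply, map_add,
      map_mul, algHom_C, Polynomial.algebraMap_apply, algebraMap_eq, aeval_X, rename_X,
      Polynomial.coe_mapAlgHom, Polynomial.map_C, Polynomial.map_X, RingHom.coe_coe, Sum.elim_inl,
      Sum.elim_inr]
    ring
  exact DFunLike.congr_fun h f

theorem polarization_substMap (A : Matrix (Fin 2) (Fin 2) ℂ) (k : ℕ)
    (f : MvPolynomial (Fin 2) ℂ) :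
    polarization k (substMap A f) = substPair A (polarization k f) := by
  simp [polarization, taylorShift_substMap]

theorem substPair_wedge (A : SpecialLinearGroup (Fin 2) ℂ) : substPair A.1 wedge = wedge := by
  refine MvPolynomial.funext fun w => ?_
  have hdet : A.1 0 0 * A.1 1 1 - A.1 0 1 * A.1 1 0 = 1 := by rw [← det_fin_two, A.2]
  simp only [eval_substPair, wedge, vecMul, dotProduct, Fin.sum_univ_two, map_sub, map_mul, eval_X,
    Sum.elim_inl, Sum.elim_inr, Function.comp_apply]
  linear_combination (w (.inl 0) * w (.inr 1) - w (.inl 1) * w (.inr 0)) * hdet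

theorem substPair_symbolMap {n : ℕ} (A : SpecialLinearGroup (Fin 2) ℂ)
    (f : (i : Fin (n + 1)) → Vhom (2 * i)) :
    substPair A.1 (symbolMap n f) = symbolMap n fun i => SymSL (2 * i) A (f i) := by
  simp [symbolMap_apply, substPair_wedge, ← polarization_substMap, SymSL]

theorem SymSL_inv_wedgePow (A : SpecialLinearGroup (Fin 2) ℂ) (n : ℕ) (v : Fin 2 → ℂ) :
    SymSL n A⁻¹ (wedgePow n v) = wedgePow n (v ᵥ* A.1) := by
  refine Subtype.ext (MvPolynomial.funext fun u => ?_)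
  have hinv : (A⁻¹).1 = !![A.1 1 1, -A.1 0 1; -A.1 1 0, A.1 0 0] :=
    (Matrix.SpecialLinearGroup.coe_inv A).trans (adjugate_fin_two A.1)
  rw [eval_SymSL, eval_wedgePow, eval_wedgePow, hinv]
  simp only [vecMul, dotProduct, Fin.sum_univ_two, of_apply, cons_val', cons_val_zero, cons_val_one,
    cons_val_fin_one, mul_neg]
  ring

theorem substPair_kernelMap {n : ℕ} (A : SpecialLinearGroup (Fin 2) ℂ)
    (T : Module.End ℂ (Vhom n)) :
    substPair A.1 (kernelMap n T) = kernelMap n (SymSL n A ∘ₗ T ∘ₗ SymSL n A⁻¹) := by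
  refine MvPolynomial.funext fun w => ?_
  rw [eval_substPair, eval_kernelMap, eval_kernelMap, LinearMap.comp_apply, LinearMap.comp_apply,
    SymSL_inv_wedgePow, eval_SymSL]
  rfl

end Equivariance

section Decomposition

theorem finrank_end_Vhom (n : ℕ) :
    Module.finrank ℂ (Module.End ℂ (Vhom n)) = (n + 1) * (n + 1) := by
  rw [Module.finrank_linearMap, finrank_Vhom]

theorem finrank_pi_Vhom_two_mul (n : ℕ) :
    Module.finrank ℂ ((i : Fin n) → Vhom (2 * i)) = n * n := by
  simp only [Module.finrank_pi_fintype, finrank_Vhom]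
  rw [Fin.sum_univ_eq_sum_range (2 * · + 1)]
  induction n with
  | zero => simp
  | succ n ih => rw [Finset.sum_range_succ, ih]; ring

/-- The identification of endomorphisms of `V_n` with their polynomial kernels. -/
def kernelEquiv (n : ℕ) : Module.End ℂ (Vhom n) ≃ₗ[ℂ] Bihom n :=
  LinearMap.linearEquivOfInjective (V := Module.End ℂ (Vhom n))
    ((kernelMap n).codRestrict _ kernelMap_mem_bihom)
    (fun _ _ h => kernelMap_injective n congr(($h : MvPolynomial (Fin 2 ⊕ Fin 2) ℂ)))
    ((finrank_end_Vhom n).trans (finrank_bihom n).symm)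

/-- The identification of bihomogeneous polynomials with their symbols `(f_0, …, f_n)`. -/
def symbolEquiv (n : ℕ) : ((i : Fin (n + 1)) → Vhom (2 * i)) ≃ₗ[ℂ] Bihom n :=
  LinearMap.linearEquivOfInjective ((symbolMap n).codRestrict _ symbolMap_mem_bihom)
    (fun _ _ h => symbolMap_injective n congr(($h : MvPolynomial (Fin 2 ⊕ Fin 2) ℂ)))
    ((finrank_pi_Vhom_two_mul (n + 1)).trans (finrank_bihom n).symm)

/-- The Clebsch-Gordan isomorphism `End V_n ≃ ⨁ i ≤ n, V_{2 i}`. -/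
def endEquiv (n : ℕ) : Module.End ℂ (Vhom n) ≃ₗ[ℂ] ((i : Fin (n + 1)) → Vhom (2 * i)) :=
  kernelEquiv n ≪≫ₗ (symbolEquiv n).symm

theorem endEquiv_eq_iff {n : ℕ} {T : Module.End ℂ (Vhom n)} {f : (i : Fin (n + 1)) → Vhom (2 * i)} :
    endEquiv n T = f ↔ kernelMap n T = symbolMap n f := by
  rw [endEquiv, LinearEquiv.trans_apply, LinearEquiv.symm_apply_eq, Subtype.ext_iff]
  exact Iff.rfl

theorem endEquiv_conj {n : ℕ} (A : SpecialLinearGroup (Fin 2) ℂ) (T : Module.End ℂ (Vhom n)) :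
    endEquiv n (SymSL n A ∘ₗ T ∘ₗ SymSL n A⁻¹) =
      fun i : Fin (n + 1) => SymSL (2 * i) A (endEquiv n T i) := by
  rw [endEquiv_eq_iff, ← substPair_kernelMap, ← substPair_symbolMap, endEquiv_eq_iff.1 rfl]

theorem symbolMap_of_tail_eq_zero {n : ℕ} {f : (i : Fin (n + 1)) → Vhom (2 * i)}
    (hf : ∀ i : Fin n, f i.succ = 0) :
    symbolMap n f = coeff 0 (f 0 : MvPolynomial (Fin 2) ℂ) • wedge ^ n := by
  have h₀ : (f 0 : MvPolynomial (Fin 2) ℂ) = C (coeff 0 (f 0 : MvPolynomial (Fin 2) ℂ)) :=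
    totalDegree_eq_zero_iff_eq_C.1 ((totalDegree_zero_iff_isHomogeneous _).2 (f 0).2)
  rw [symbolMap_apply, Fin.sum_univ_succ, Finset.sum_eq_zero fun i _ => by simp [hf], h₀]
  simp [polarization_zero, smul_eq_C_mul, mul_comm]

theorem isCompl_span_one_ker_trace {K V : Type*} [Field K] [AddCommGroup V] [Module K V]
    [FiniteDimensional K V] (hfinrank : (Module.finrank K V : K) ≠ 0) :
    IsCompl (Submodule.span K {(1 : Module.End K V)}) (LinearMap.ker (LinearMap.trace K V)) := by
  have htrace : LinearMap.trace K V 1 ≠ 0 := by rwa [LinearMap.trace_one]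
  refine (Module.Dual.isCompl_ker_of_disjoint_of_ne_bot (f := LinearMap.trace K V)
    (fun h => htrace (by rw [h, LinearMap.zero_apply])) ?_ ?_).symm
  · exact Submodule.disjoint_span_singleton_of_notMem htrace
  · rw [Ne, Submodule.span_singleton_eq_bot]
    exact fun h => htrace (by rw [h, map_zero])

/-- The components of positive degree in the Clebsch-Gordan decomposition of `End V_n`. -/
def endTail (n : ℕ) : Module.End ℂ (Vhom n) →ₗ[ℂ] ((i : Fin n) → Vhom (2 * (i.val + 1))) :=
  (LinearMap.pi fun i : Fin n => LinearMap.proj i.succ) ∘ₗ (endEquiv n).toLinearMap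

theorem endTail_surjective (n : ℕ) : Function.Surjective (endTail n) :=
  fun f => ⟨(endEquiv n).symm (Fin.cons 0 f), by
    funext i
    simp [endTail]⟩

theorem endTail_one (n : ℕ) : endTail n 1 = 0 := by
  let f₀ : Vhom (2 * ((0 : Fin (n + 1)) : ℕ)) := ⟨1, isHomogeneous_one (Fin 2) ℂ⟩
  have hsymbol : symbolMap n (Fin.cons f₀ 0) =
      coeff 0 (1 : MvPolynomial (Fin 2) ℂ) • wedge ^ n := symbolMap_of_tail_eq_zero fun _ => rfl
  rw [coeff_zero_one, one_smul, ← kernelMap_one] at hsymbol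
  have h : endEquiv n 1 = Fin.cons f₀ 0 := endEquiv_eq_iff.2 hsymbol.symm
  funext i
  exact congrFun h i.succ

theorem ker_endTail (n : ℕ) : LinearMap.ker (endTail n) = Submodule.span ℂ {1} := by
  refine le_antisymm (fun T hT => Submodule.mem_span_singleton.2 ?_) ?_
  · have hsymbol := symbolMap_of_tail_eq_zero (f := endEquiv n T) (congrFun hT)
    rw [← endEquiv_eq_iff.1 rfl, ← kernelMap_one, ← map_smul] at hsymbol
    exact ⟨_, (kernelMap_injective n hsymbol).symm⟩
  · simpa using endTail_one n

theorem isCompl_ker_endTail_slV (n : ℕ) : IsCompl (LinearMap.ker (endTail n)) (slV n) := by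
  rw [ker_endTail]
  refine isCompl_span_one_ker_trace ?_
  rw [finrank_Vhom]
  exact_mod_cast n.succ_ne_zero

theorem endTail_conj {n : ℕ} (A : SpecialLinearGroup (Fin 2) ℂ) (T : Module.End ℂ (Vhom n)) :
    endTail n (SymSL n A ∘ₗ T ∘ₗ SymSL n A⁻¹) =
      fun i => SymSL (2 * (i.val + 1)) A (endTail n T i) :=
  funext fun i => congrFun (endEquiv_conj A T) i.succ

end Decomposition

/-- Clebsch–Gordan formula for the adjoint of `Sym^n`.
There is a ℂ-linear `SL₂(ℂ)`-equivariant isomorphism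
`sl_{n+1}(ℂ) ≅ ⊕_{i=1}^{n} V_{2i}`, where `SL₂(ℂ)` acts on `sl_{n+1}(ℂ)` by
`A · X = Sym^n(A) ∘ X ∘ Sym^n(A)⁻¹` and on each summand `V_{2i}` via `Sym^{2i}`. -/
theorem clebsch_gordan_adjoint_symPow (n : ℕ) (hn : 1 ≤ n) :
    ∃ e : (slV n) ≃ₗ[ℂ] ((i : Fin n) → Vhom (2 * (i.val + 1))),
      ∀ (A : Matrix.SpecialLinearGroup (Fin 2) ℂ) (Xm Ym : slV n),
        (Ym : Module.End ℂ (Vhom n)) =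
            SymSL n A ∘ₗ (Xm : Module.End ℂ (Vhom n)) ∘ₗ SymSL n A⁻¹ →
          e Ym = fun i => SymSL (2 * (i.val + 1)) A (e Xm i) := by
  let e := (Submodule.quotientEquivOfIsCompl _ _ (isCompl_ker_endTail_slV n)).symm ≪≫ₗ
    LinearMap.quotKerEquivOfSurjective (M := Module.End ℂ (Vhom n)) (endTail n)
      (endTail_surjective n)
  have he (T : slV n) : e T = endTail n T := by simp [e]
  refine ⟨e, fun A Xm Ym hY => ?_⟩
  rw [he, he, hY, endTail_conj]
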